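/- arXiv:0710.0429 — 2 statements merged into one kernel-verified Lean document; each statement's English description precedes it below -/
import Mathlib

section
/- The quadruple (W(X,Ω), concatenation, {P_ω : ω ∈ Ω}, j_X) is the free Ω-operated monoid on X. Precisely: for every monoid H, every family of maps α_ω : H → H (ω ∈ Ω), and every map f : X → H, there exists a unique monoid homomorphism φ : W(X,Ω) → H such that φ(x) = f(x) for every x ∈ X and φ(P_ω(w)) = α_ω(φ(w)) for every w ∈ W(X,Ω) and every ω ∈ Ω. -/
/-- The left bracket letter `⌊_ω` as a one-letter word. -/
def lbr {X Ω : Type*} (ω : Ω) : FreeMonoid (X ⊕ (Ω ⊕ Ω)) :=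
  FreeMonoid.of (Sum.inr (Sum.inl ω))

/-- The right bracket letter `⌋_ω` as a one-letter word. -/
def rbr {X Ω : Type*} (ω : Ω) : FreeMonoid (X ⊕ (Ω ⊕ Ω)) :=
  FreeMonoid.of (Sum.inr (Sum.inr ω))

/-- The operator `P_ω` on the free monoid: `P_ω w = ⌊_ω w ⌋_ω`. -/
def Pop {X Ω : Type*} (ω : Ω) (w : FreeMonoid (X ⊕ (Ω ⊕ Ω))) : FreeMonoid (X ⊕ (Ω ⊕ Ω)) :=
  lbr ω * w * rbr ω

/-- `(X,Ω)`-decorated Motzkin words: the smallest subset of the free monoid on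
`X ⊔ {⌊_ω} ⊔ {⌋_ω}` containing `1` and all one-letter words `x` (`x ∈ X`), closed under
concatenation and all operators `P_ω`. -/
inductive IsMW (X Ω : Type*) : FreeMonoid (X ⊕ (Ω ⊕ Ω)) → Prop
  | one : IsMW X Ω 1
  | letter (x : X) : IsMW X Ω (FreeMonoid.of (Sum.inl x))
  | mul {u v : FreeMonoid (X ⊕ (Ω ⊕ Ω))} : IsMW X Ω u → IsMW X Ω v → IsMW X Ω (u * v)
  | op (ω : Ω) {u : FreeMonoid (X ⊕ (Ω ⊕ Ω))} : IsMW X Ω u → IsMW X Ω (Pop ω u)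

/-- `W(X,Ω)` as a submonoid of the free monoid. -/
def MWsub (X Ω : Type*) : Submonoid (FreeMonoid (X ⊕ (Ω ⊕ Ω))) where
  carrier := {w | IsMW X Ω w}
  one_mem' := IsMW.one
  mul_mem' := fun h1 h2 => IsMW.mul h1 h2

/-- The operator `P_ω` restricted to `W(X,Ω)`. -/
def PopSub {X Ω : Type*} (ω : Ω) (w : MWsub X Ω) : MWsub X Ω :=
  ⟨Pop ω w.1, IsMW.op ω w.2⟩

/-- The natural map `j_X : X → W(X,Ω)` sending `x` to the one-letter word `x`. -/
def jMW {X Ω : Type*} (x : X) : MWsub X Ω :=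
  ⟨FreeMonoid.of (Sum.inl x), IsMW.letter x⟩

/-- One step of the stack machine evaluating a word. -/
def mwStep {X Ω H : Type*} [Monoid H] (α : Ω → H → H) (f : X → H) :
    List H → X ⊕ (Ω ⊕ Ω) → List H
  | h :: s, Sum.inl x => (h * f x) :: s
  | s, Sum.inr (Sum.inl _) => 1 :: s
  | h :: g :: s, Sum.inr (Sum.inr ω) => (g * α ω h) :: s
  | s, _ => s

/-- Running the stack machine on a word. -/
def mwRun {X Ω H : Type*} [Monoid H] (α : Ω → H → H) (f : X → H)
    (w : FreeMonoid (X ⊕ (Ω ⊕ Ω))) (s : List H) : List H :=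
  (FreeMonoid.toList w).foldl (mwStep α f) s

theorem mwRun_mul {X Ω H : Type*} [Monoid H] (α : Ω → H → H) (f : X → H)
    (u v : FreeMonoid (X ⊕ (Ω ⊕ Ω))) (s : List H) :
    mwRun α f (u * v) s = mwRun α f v (mwRun α f u s) := by
  simp [mwRun, FreeMonoid.toList_mul, List.foldl_append]

theorem mwRun_of {X Ω H : Type*} [Monoid H] (α : Ω → H → H) (f : X → H)
    (a : X ⊕ (Ω ⊕ Ω)) (s : List H) :
    mwRun α f (FreeMonoid.of a) s = mwStep α f s a := by
  simp [mwRun, FreeMonoid.toList_of]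

/-- The value of a word. -/
def mwVal {X Ω H : Type*} [Monoid H] (α : Ω → H → H) (f : X → H)
    (w : FreeMonoid (X ⊕ (Ω ⊕ Ω))) : H :=
  (mwRun α f w [1]).headD 1

theorem mwRun_pop {X Ω H : Type*} [Monoid H] (α : Ω → H → H) (f : X → H)
    (ω : Ω) (u : FreeMonoid (X ⊕ (Ω ⊕ Ω))) (e : H)
    (he : ∀ h s, mwRun α f u (h :: s) = (h * e) :: s) (h : H) (s : List H) :
    mwRun α f (Pop ω u) (h :: s) = (h * α ω e) :: s := by
  simp [Pop, lbr, rbr, mwRun_mul, mwRun_of, mwStep, he]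

theorem mwRun_exists {X Ω H : Type*} [Monoid H] (α : Ω → H → H) (f : X → H)
    {w : FreeMonoid (X ⊕ (Ω ⊕ Ω))} (hw : IsMW X Ω w) :
    ∃ e : H, ∀ h s, mwRun α f w (h :: s) = (h * e) :: s := by
  induction hw with
  | one => exact ⟨1, fun h s => by simp [mwRun]⟩
  | letter x => exact ⟨f x, fun h s => by simp [mwRun_of, mwStep]⟩
  | mul _ _ ih1 ih2 =>
    obtain ⟨a, ha⟩ := ih1
    obtain ⟨b, hb⟩ := ih2
    exact ⟨a * b, fun h s => by simp [mwRun_mul, ha, hb, mul_assoc]⟩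
  | op ω _ ih =>
    obtain ⟨a, ha⟩ := ih
    exact ⟨α ω a, mwRun_pop α f ω _ a ha⟩

theorem mwRun_eq {X Ω H : Type*} [Monoid H] (α : Ω → H → H) (f : X → H)
    {w : FreeMonoid (X ⊕ (Ω ⊕ Ω))} (hw : IsMW X Ω w) (h : H) (s : List H) :
    mwRun α f w (h :: s) = (h * mwVal α f w) :: s := by
  obtain ⟨e, he⟩ := mwRun_exists α f hw
  simp [mwVal, he]

/-- The evaluation homomorphism. -/
def mwHom {X Ω H : Type*} [Monoid H] (α : Ω → H → H) (f : X → H) : MWsub X Ω →* H where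
  toFun w := mwVal α f w.1
  map_one' := by simp [mwVal, mwRun]
  map_mul' u v := by
    have hu := mwRun_eq α f u.2
    have hv := mwRun_eq α f v.2
    change mwVal α f (u.1 * v.1) = _
    rw [mwVal, mwRun_mul, hu, hv]
    simp

/-- `(W(X,Ω), concatenation, {P_ω}, j_X)` is the free `Ω`-operated monoid on `X`:
for every monoid `H`, family of maps `α_ω : H → H` and map `f : X → H`, there is a unique
monoid homomorphism `φ : W(X,Ω) → H` with `φ (j_X x) = f x` for all `x ∈ X` and
`φ (P_ω w) = α_ω (φ w)` for all `w ∈ W(X,Ω)`, `ω ∈ Ω`. -/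
theorem motzkinWords_free_operated_monoid
    (X Ω : Type*) [Nonempty X] [Nonempty Ω]
    (H : Type*) [Monoid H] (α : Ω → H → H) (f : X → H) :
    ∃! φ : MWsub X Ω →* H,
      (∀ x : X, φ (jMW x) = f x) ∧
      ∀ (ω : Ω) (w : MWsub X Ω), φ (PopSub ω w) = α ω (φ w) := by
  refine ⟨mwHom α f, ⟨fun x => ?_, fun ω w => ?_⟩, ?_⟩
  · change mwVal α f (FreeMonoid.of (Sum.inl x)) = f x
    simp [mwVal, mwRun_of, mwStep]
  · change mwVal α f (Pop ω w.1) = α ω (mwVal α f w.1)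
    rw [mwVal, mwRun_pop α f ω w.1 _ (mwRun_eq α f w.2)]
    simp
  · rintro ψ ⟨h1, h2⟩
    ext ⟨w, hw⟩
    change ψ ⟨w, hw⟩ = mwVal α f w
    have key : ∀ h : IsMW X Ω w, ψ ⟨w, h⟩ = mwVal α f w := by
      clear hw
      intro hw
      induction hw with
      | one => exact (map_one ψ).trans (map_one (mwHom α f)).symm
      | letter x =>
        refine (h1 x).trans ?_
        simp [mwVal, mwRun_of, mwStep]
      | @mul u v hu hv ih1 ih2 =>
        have e1 := map_mul ψ (⟨u, hu⟩ : MWsub X Ω) ⟨v, hv⟩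
        have e2 := map_mul (mwHom α f) (⟨u, hu⟩ : MWsub X Ω) ⟨v, hv⟩
        refine e1.trans (Eq.trans ?_ e2.symm)
        exact congrArg₂ (· * ·) ih1 ih2
      | @op ω u hu ih =>
        refine (h2 ω ⟨u, hu⟩).trans ?_
        rw [ih, mwVal.eq_1 α f (Pop ω u), mwRun_pop α f ω u _ (mwRun_eq α f hu)]
        simp
    exact key hw
end

section
/- S(X,Ω) equals the set of peak-free nonempty (X,Ω)-decorated Motzkin words; that is, for w ∈ M(X,Ω): w lies in S(X,Ω) if and only if w lies in W(X,Ω), w ≠ 1, and w contains no factor of the form ⌊_ω ⌋_{ω'} (no letter ⌊_ω immediately followed by a letter ⌋_{ω'}, for any ω, ω' ∈ Ω). -/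
/-- `S(X,Ω)`: contains the letters `x ∈ X`, closed under concatenation and `P_ω`. -/
inductive IsSW (X Ω : Type*) : FreeMonoid (X ⊕ (Ω ⊕ Ω)) → Prop
  | letter (x : X) : IsSW X Ω (FreeMonoid.of (Sum.inl x))
  | mul {u v : FreeMonoid (X ⊕ (Ω ⊕ Ω))} : IsSW X Ω u → IsSW X Ω v → IsSW X Ω (u * v)
  | op (ω : Ω) {u : FreeMonoid (X ⊕ (Ω ⊕ Ω))} : IsSW X Ω u → IsSW X Ω (Pop ω u)

/-- Two adjacent letters do not form a peak. -/
def NoPk {X Ω : Type*} (a b : X ⊕ (Ω ⊕ Ω)) : Prop :=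
  ¬ ∃ ω ω' : Ω, a = Sum.inr (Sum.inl ω) ∧ b = Sum.inr (Sum.inr ω')

/-- Invariant of words in `S(X,Ω)`, phrased on lists. -/
def Good {X Ω : Type*} (l : List (X ⊕ (Ω ⊕ Ω))) : Prop :=
  l ≠ [] ∧ l.IsChain NoPk ∧ (∀ a ∈ l.getLast?, ∀ ω : Ω, a ≠ Sum.inr (Sum.inl ω)) ∧
    (∀ a ∈ l.head?, ∀ ω : Ω, a ≠ Sum.inr (Sum.inr ω))

theorem Good.append {X Ω : Type*} {l m : List (X ⊕ (Ω ⊕ Ω))} (hl : Good l) (hm : Good m) :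
    Good (l ++ m) := by
  obtain ⟨h1, h2, h3, h4⟩ := hl
  obtain ⟨k1, k2, k3, k4⟩ := hm
  refine ⟨by simp [h1], ?_, ?_, ?_⟩
  · rw [List.isChain_append]
    refine ⟨h2, k2, ?_⟩
    rintro x hx y hy ⟨ω, ω', rfl, rfl⟩
    exact h3 _ hx ω rfl
  · rw [List.getLast?_append_of_ne_nil _ k1]
    exact k3
  · rw [List.head?_append_of_ne_nil _ h1]
    exact h4

theorem Good.bracket {X Ω : Type*} {l : List (X ⊕ (Ω ⊕ Ω))} (hl : Good l) (ω : Ω) :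
    Good ([Sum.inr (Sum.inl ω)] ++ l ++ [Sum.inr (Sum.inr ω)]) := by
  obtain ⟨h1, h2, h3, h4⟩ := hl
  refine ⟨by simp, ?_, ?_, ?_⟩
  · rw [List.isChain_append, List.isChain_append]
    refine ⟨⟨by simp, h2, ?_⟩, by simp, ?_⟩
    · rintro x hx y hy ⟨ω, ω', rfl, rfl⟩
      exact h4 _ hy ω' rfl
    · rw [List.getLast?_append_of_ne_nil _ h1]
      rintro x hx y hy ⟨ω, ω', rfl, rfl⟩
      exact h3 _ hx ω rfl
  · rw [List.getLast?_append_of_ne_nil _ (by simp)]; simp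
  · simp

theorem IsSW.good {X Ω : Type*} {w : FreeMonoid (X ⊕ (Ω ⊕ Ω))} (h : IsSW X Ω w) :
    Good (FreeMonoid.toList w) := by
  induction h with
  | letter x => simp [Good]
  | mul _ _ h1 h2 => rw [FreeMonoid.toList_mul]; exact h1.append h2
  | op ω _ h => exact h.bracket ω

theorem IsSW.isMW {X Ω : Type*} {w : FreeMonoid (X ⊕ (Ω ⊕ Ω))} (h : IsSW X Ω w) :
    IsMW X Ω w := by
  induction h with
  | letter x => exact .letter x
  | mul _ _ h1 h2 => exact .mul h1 h2
  | op ω _ h => exact .op ω h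

theorem IsMW.isSW_of {X Ω : Type*} {w : FreeMonoid (X ⊕ (Ω ⊕ Ω))} (h : IsMW X Ω w) :
    (¬ ∃ (ω ω' : Ω) (u v : FreeMonoid (X ⊕ (Ω ⊕ Ω))), w = u * lbr ω * rbr ω' * v) →
      w = 1 ∨ IsSW X Ω w := by
  induction h with
  | one => exact fun _ => .inl rfl
  | letter x => exact fun _ => .inr (.letter x)
  | @mul a b _ _ h1 h2 =>
    intro hp
    have ha := h1 (by
      rintro ⟨ω, ω', u, v, rfl⟩
      exact hp ⟨ω, ω', u, v * b, by simp only [mul_assoc]⟩)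
    have hb := h2 (by
      rintro ⟨ω, ω', u, v, rfl⟩
      exact hp ⟨ω, ω', a * u, v, by simp only [mul_assoc]⟩)
    rcases ha with rfl | ha
    · simpa using hb
    · rcases hb with rfl | hb
      · right; simpa using ha
      · exact .inr (.mul ha hb)
  | @op ω a _ h =>
    intro hp
    have ha := h (by
      rintro ⟨ω₁, ω', u, v, rfl⟩
      exact hp ⟨ω₁, ω', lbr ω * u, v * rbr ω, by simp only [Pop, mul_assoc]⟩)
    rcases ha with rfl | ha
    · exact absurd ⟨ω, ω, 1, 1, by simp [Pop]⟩ hp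
    · exact .inr (.op ω ha)

/-- `S(X,Ω)` is the set of peak-free nonempty `(X,Ω)`-decorated Motzkin words: a word `w`
lies in `S(X,Ω)` iff `w ∈ W(X,Ω)`, `w ≠ 1`, and `w` contains no factor `⌊_ω ⌋_{ω'}`. -/
theorem isSW_iff_peakFree (X Ω : Type*) [Nonempty X] [Nonempty Ω]
    (w : FreeMonoid (X ⊕ (Ω ⊕ Ω))) :
    IsSW X Ω w ↔
      IsMW X Ω w ∧ w ≠ 1 ∧
        ¬ ∃ (ω ω' : Ω) (u v : FreeMonoid (X ⊕ (Ω ⊕ Ω))),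
            w = u * lbr ω * rbr ω' * v := by
  constructor
  · intro h
    obtain ⟨h1, h2, -, -⟩ := h.good
    refine ⟨h.isMW, fun e => h1 (by rw [e]; rfl), ?_⟩
    rintro ⟨ω, ω', u, v, rfl⟩
    have e : FreeMonoid.toList (u * lbr ω * rbr ω' * v) = FreeMonoid.toList u ++
        (Sum.inr (Sum.inl ω) :: Sum.inr (Sum.inr ω') :: FreeMonoid.toList v) := by
      simp [lbr, rbr]
    rw [e, List.isChain_append, List.isChain_cons_cons] at h2
    exact h2.2.1.1 ⟨ω, ω', rfl, rfl⟩
  · rintro ⟨h, h1, hp⟩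
    exact (h.isSW_of hp).resolve_left h1
end
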